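/- For every (t,x) ∈ (a,b) × ℝ, the partial derivative of C in t satisfies ∂_t C(t,x) = E[ ( (∂_{xx}A)² + 2(m − m') (∂_{xx}A)(∂_x A)² ) V ] + ((m − m')m/2) · ( E[ (∂_x A)⁴ V ] − ( E[ (∂_x A)² V ] )² ), where in each expectation the partial derivatives of A are evaluated at (t, x + z√(t−a)) and V = V(t, x, x + z√(t−a)). -/

import Mathlib

/-!
Write `s = b - t`, `k = m'`. Splitting the Gaussian integral at the sign change of `x + z√s` gives
`exp(k A) = absExp k s x` in terms of the Gaussian distribution function. The functions
`u = ∂ₓA` and `w`, twice the heat kernel divided by `exp(k A)`, then satisfy a closed system: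
`∂ₓu = k (1 - u²) + w`, `∂ₛu = ∂ₓw / 2`, `∂ₓw = -(x / s + k u) w` and `∂ₛA = (k + w) / 2`
(`hasDerivAt_aF`, `hasDerivAt_uF`, `hasDerivAt_wF`). In particular `A` solves the Parisi equation
`∂ₜA = -(∂ₓₓA + m' (∂ₓA)²) / 2`. Since `|u| ≤ 1` and `w` is bounded for `s` away from `0`, everything
built from these functions grows at most exponentially in `x`.

For such functions `d/dt E f(t, x + z√(t-a)) = E (∂ₜf + ∂ₓₓf / 2)` by dominated differentiation and
Gaussian integration by parts (`hasDerivAt_gauss_expect`). With `L = ∂ₜ + ∂ₓₓ / 2`, the equations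
above give
`L exp(m A) = m (m - m') / 2 (∂ₓA)² exp(m A)` and
`L ((∂ₓA)² exp(m A)) = ((∂ₓₓA)² + 2 (m - m') ∂ₓₓA (∂ₓA)² + m (m - m') / 2 (∂ₓA)⁴) exp(m A)`
(`hasDerivAt_denom`, `hasDerivAt_numer`). As `exp(m B) = E exp(m A)`, `C` is the quotient
`E[(∂ₓA)² exp(m A)] / E[exp(m A)]`, and the quotient rule yields the formula.
-/

open MeasureTheory ProbabilityTheory

/-- `A(t,x) = (1/m') log E[exp(m'|x + z√(b-t)|)]` for a standard Gaussian `z`. -/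
noncomputable def A (b m' t x : ℝ) : ℝ :=
  (1 / m') * Real.log (∫ z, Real.exp (m' * |x + z * Real.sqrt (b - t)|) ∂(gaussianReal 0 1))

/-- `B(t,x) = (1/m) log E[exp(m A(t, x + z√(t-a)))]` for a standard Gaussian `z`. -/
noncomputable def B (a b m m' t x : ℝ) : ℝ :=
  (1 / m) * Real.log
    (∫ z, Real.exp (m * A b m' t (x + z * Real.sqrt (t - a))) ∂(gaussianReal 0 1))

/-- `V(t,x,y) = exp(m (A(t,y) - B(t,x)))`. -/
noncomputable def V (a b m m' t x y : ℝ) : ℝ :=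
  Real.exp (m * (A b m' t y - B a b m m' t x))

/-- `C(t,x) = E[(∂ₓA(t, x+z√(t-a)))² V(t,x,x+z√(t-a))]`. -/
noncomputable def C (a b m m' t x : ℝ) : ℝ :=
  ∫ z, (deriv (A b m' t) (x + z * Real.sqrt (t - a))) ^ 2
      * V a b m m' t x (x + z * Real.sqrt (t - a)) ∂(gaussianReal 0 1)


open Filter Topology Set

/-! ### Closed forms for `A` and its derivatives -/

/-- The standard Gaussian density. -/
noncomputable def gphi (z : ℝ) : ℝ := (√(2 * Real.pi))⁻¹ * Real.exp (-z ^ 2 / 2)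

/-- The standard Gaussian distribution function. -/
noncomputable def gPhi (x : ℝ) : ℝ := ∫ z in Iic x, gphi z

/-- The heat kernel, i.e. the density at `x` of a centred Gaussian of variance `s > 0`. -/
noncomputable def heatK (s x : ℝ) : ℝ := gphi (x / √s) / √s

/-- The contribution `E[exp(k (x + z√s)); x + z√s > 0]` of a half-line, in closed form. -/
noncomputable def halfExp (k s x : ℝ) : ℝ :=
  Real.exp (k ^ 2 * s / 2 + k * x) * gPhi (x / √s + k * √s)

/-- `E[exp(k |x + z√s|)]` in closed form. -/
noncomputable def absExp (k s x : ℝ) : ℝ := halfExp k s x + halfExp k s (-x)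

/-- The odd counterpart of `absExp`, namely `E[sign(x + z√s) exp(k |x + z√s|)]`. -/
noncomputable def sgnExp (k s x : ℝ) : ℝ := halfExp k s x - halfExp k s (-x)

/-- `∂ₓA` in closed form, with `s = b - t` and `k = m'`. -/
noncomputable def uF (k s x : ℝ) : ℝ := sgnExp k s x / absExp k s x

/-- The kernel part of `∂ₓₓA`, which equals `k (1 - u²) + w`. -/
noncomputable def wF (k s x : ℝ) : ℝ := 2 * heatK s x / absExp k s x

/-- `A` as a function of `s = b - t`, with `k = m'`. -/
noncomputable def aF (k s x : ℝ) : ℝ := 1 / k * Real.log (absExp k s x)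

lemma gphi_eq : gphi = gaussianPDFReal 0 1 := by
  funext z; simp [gphi, gaussianPDFReal]

lemma gphi_continuous : Continuous gphi := by unfold gphi; fun_prop

lemma gphi_integrable : Integrable gphi := by
  rw [gphi_eq]; exact integrable_gaussianPDFReal 0 1

lemma gphi_nonneg (z : ℝ) : 0 ≤ gphi z := by unfold gphi; positivity

lemma gphi_le_one (z : ℝ) : gphi z ≤ 1 := by
  unfold gphi
  have h1 : (√(2 * Real.pi))⁻¹ ≤ 1 := by
    apply inv_le_one_of_one_le₀
    rw [Real.one_le_sqrt]
    linarith [Real.pi_gt_three]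
  have h2 : Real.exp (-z ^ 2 / 2) ≤ 1 := by
    rw [Real.exp_le_one_iff]; nlinarith [sq_nonneg z]
  exact mul_le_one₀ h1 (by positivity) h2

lemma hasDerivAt_gphi (z : ℝ) : HasDerivAt gphi (-z * gphi z) z := by
  unfold gphi
  have h := (((hasDerivAt_id z).pow 2).neg.div_const 2).exp.const_mul (√(2 * Real.pi))⁻¹
  convert! h using 1
  simp; ring

lemma gphi_neg (z : ℝ) : gphi (-z) = gphi z := by simp [gphi]

/-- Gaussian change of measure (completing the square). -/
lemma exp_mul_gphi (c z : ℝ) : Real.exp (c ^ 2 / 2) * gphi (z + c) = Real.exp (-(c * z)) * gphi z := by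
  unfold gphi
  rw [mul_left_comm, mul_left_comm (Real.exp (-(c * z))), ← Real.exp_add, ← Real.exp_add]
  congr 2; ring

lemma hasDerivAt_gPhi (x : ℝ) : HasDerivAt gPhi (gphi x) x := by
  have h : gPhi = fun y => (∫ z in Iic (0 : ℝ), gphi z) + ∫ z in (0 : ℝ)..y, gphi z := by
    funext y
    rw [← intervalIntegral.integral_Iic_sub_Iic gphi_integrable.integrableOn
      gphi_integrable.integrableOn]
    simp [gPhi]
  rw [h]
  exact (intervalIntegral.integral_hasDerivAt_right (gphi_continuous.intervalIntegrable _ _)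
    (gphi_continuous.stronglyMeasurableAtFilter _ _) gphi_continuous.continuousAt).const_add _

lemma gPhi_nonneg (x : ℝ) : 0 ≤ gPhi x :=
  setIntegral_nonneg measurableSet_Iic fun z _ => gphi_nonneg z

lemma gPhi_le_one (x : ℝ) : gPhi x ≤ 1 := by
  have h := setIntegral_le_integral (s := Iic x) gphi_integrable
    (Eventually.of_forall gphi_nonneg)
  have h1 : ∫ z, gphi z = 1 := by
    rw [gphi_eq]; exact integral_gaussianPDFReal_eq_one 0 one_ne_zero
  exact h.trans h1.le

lemma integral_Iic_gphi_shift (c d : ℝ) : ∫ z in Iic c, gphi (z + d) = gPhi (c + d) := by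
  have h := (measurePreserving_add_right volume d).setIntegral_preimage_emb
    (measurableEmbedding_addRight d) gphi (Iic (c + d))
  simpa [gPhi] using h

lemma integrable_exp_abs_gauss (c : ℝ) :
    Integrable (fun z => Real.exp (c * |z|)) (gaussianReal 0 1) :=
  integrable_exp_mul_abs (integrable_exp_mul_gaussianReal c) (integrable_exp_mul_gaussianReal (-c))

lemma integral_gauss (f : ℝ → ℝ) : ∫ z, f z ∂(gaussianReal 0 1) = ∫ z, f z * gphi z := by
  rw [integral_gaussianReal_eq_integral_smul one_ne_zero, gphi_eq]
  simp [mul_comm]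

lemma integrable_gauss {f : ℝ → ℝ} (hf : Integrable f (gaussianReal 0 1)) :
    Integrable (fun z => f z * gphi z) := by
  rw [gaussianReal_of_var_ne_zero 0 one_ne_zero,
    integrable_withDensity_iff (measurable_gaussianPDF 0 1)
      (Eventually.of_forall fun _ => gaussianPDF_lt_top)] at hf
  simpa [gphi_eq] using hf

lemma integrable_exp_abs_affine {k : ℝ} (hk : 0 ≤ k) (x r : ℝ) :
    Integrable (fun z => Real.exp (k * |x + z * r|)) (gaussianReal 0 1) := by
  refine ((integrable_exp_abs_gauss (k * |r|)).const_mul (Real.exp (k * |x|))).mono'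
    (by fun_prop) (Eventually.of_forall fun z => ?_)
  rw [Real.norm_eq_abs, Real.abs_exp, ← Real.exp_add, Real.exp_le_exp]
  have := abs_add_le x (z * r)
  rw [abs_mul] at this
  nlinarith [mul_le_mul_of_nonneg_left this hk]

/-- The half-lines `x + z√s ≤ 0` and `x + z√s > 0` contribute one `halfExp` each. -/
lemma integral_exp_abs {k s : ℝ} (hk : 0 ≤ k) (hs : 0 < s) (x : ℝ) :
    ∫ z, Real.exp (k * |x + z * √s|) ∂(gaussianReal 0 1) = absExp k s x := by
  have hr : 0 < √s := Real.sqrt_pos.2 hs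
  have hr2 : √s ^ 2 = s := Real.sq_sqrt hs.le
  have hint := integrable_gauss (integrable_exp_abs_affine hk x (√s))
  rw [integral_gauss, ← integral_add_compl (measurableSet_Iic (a := -x / √s)) hint, compl_Iic,
    absExp, add_comm]
  congr 1
  · have e : Ioi (-x / √s) = Ioi (-(x / √s)) := by rw [neg_div]
    rw [e, ← integral_comp_neg_Iic, halfExp, ← integral_Iic_gphi_shift, ← integral_const_mul]
    refine setIntegral_congr_fun measurableSet_Iic fun z hz => ?_
    have hz' : 0 ≤ x + -z * √s := by
      have := (le_div_iff₀ hr).1 (mem_Iic.1 hz); linarith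
    have h := exp_mul_gphi (k * √s) z
    simp only [abs_of_nonneg hz', gphi_neg]
    rw [Real.exp_add, mul_comm (Real.exp _) (Real.exp (k * x)), mul_assoc]
    rw [mul_pow, hr2] at h
    rw [h, ← mul_assoc, ← Real.exp_add]
    congr 2; ring
  · rw [halfExp, ← integral_Iic_gphi_shift, ← integral_const_mul]
    refine setIntegral_congr_fun measurableSet_Iic fun z hz => ?_
    have hz' : x + z * √s ≤ 0 := by
      have := (le_div_iff₀ hr).1 (mem_Iic.1 hz); linarith
    have h := exp_mul_gphi (k * √s) z
    simp only [abs_of_nonpos hz']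
    rw [Real.exp_add, mul_comm (Real.exp _) (Real.exp (k * -x)), mul_assoc]
    rw [mul_pow, hr2] at h
    rw [h, ← mul_assoc, ← Real.exp_add]
    congr 2; ring

lemma one_le_absExp {k s : ℝ} (hk : 0 ≤ k) (hs : 0 < s) (x : ℝ) : 1 ≤ absExp k s x := by
  rw [← integral_exp_abs hk hs]
  have h : ∫ _ : ℝ, (1 : ℝ) ∂(gaussianReal 0 1) ≤
      ∫ z, Real.exp (k * |x + z * √s|) ∂(gaussianReal 0 1) :=
    integral_mono (integrable_const _) (integrable_exp_abs_affine hk x _)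
      fun z => Real.one_le_exp (by positivity)
  simpa using h

lemma A_eq {b m' t : ℝ} (hm' : 0 ≤ m') (ht : t < b) (x : ℝ) :
    A b m' t x = aF m' (b - t) x := by
  rw [A, integral_exp_abs hm' (by linarith), aF]

/-- Chain rule along a curve `t ↦ (σ t, η t)`: the `x`-derivative of `halfExp` is
`k * halfExp + heatK`. Completing the square (`exp_mul_gphi`) produces the heat kernel. -/
lemma hasDerivAt_halfExp (k : ℝ) {σ η : ℝ → ℝ} {σ' η' t : ℝ} (hσ : HasDerivAt σ σ' t)
    (hη : HasDerivAt η η' t) (hs : 0 < σ t) :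
    HasDerivAt (fun t => halfExp k (σ t) (η t))
      ((k ^ 2 * σ' / 2 + k * η') * halfExp k (σ t) (η t)
        + heatK (σ t) (η t) * (η' + (k / 2 - η t / (2 * σ t)) * σ')) t := by
  have hr : 0 < √(σ t) := Real.sqrt_pos.2 hs
  have hr2 : √(σ t) ^ 2 = σ t := Real.sq_sqrt hs.le
  have h1 := (((hσ.const_mul (k ^ 2)).div_const 2).add (hη.const_mul k)).exp
  have hq := hσ.sqrt hs.ne'
  have h2 := (hasDerivAt_gPhi (η t / √(σ t) + k * √(σ t))).comp t
    ((hη.div hq hr.ne').add (hq.const_mul k))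
  have h3 := exp_mul_gphi (k * √(σ t)) (η t / √(σ t))
  rw [mul_pow, hr2, show k * √(σ t) * (η t / √(σ t)) = k * η t by field_simp] at h3
  have h4 : Real.exp (k ^ 2 * σ t / 2 + k * η t) * gphi (η t / √(σ t) + k * √(σ t))
      = gphi (η t / √(σ t)) := by
    rw [Real.exp_add, mul_right_comm, h3, mul_right_comm, ← Real.exp_add]; simp
  convert! h1.mul h2 using 1
  simp only [Pi.add_apply, Function.comp_apply, Pi.div_apply]
  rw [← mul_assoc (Real.exp _) (gphi _), h4]
  simp only [halfExp, heatK]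
  generalize √(σ t) = r at *
  rw [← hr2]
  field_simp
  ring

lemma heatK_neg (s x : ℝ) : heatK s (-x) = heatK s x := by
  rw [heatK, neg_div, gphi_neg, heatK]

lemma hasDerivAt_absExp (k : ℝ) {σ η : ℝ → ℝ} {σ' η' t : ℝ} (hσ : HasDerivAt σ σ' t)
    (hη : HasDerivAt η η' t) (hs : 0 < σ t) :
    HasDerivAt (fun t => absExp k (σ t) (η t))
      (k ^ 2 / 2 * σ' * absExp k (σ t) (η t) + k * η' * sgnExp k (σ t) (η t)
        + k * σ' * heatK (σ t) (η t)) t := by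
  convert! (hasDerivAt_halfExp k hσ hη hs).add (hasDerivAt_halfExp k hσ hη.neg hs) using 1
  simp only [Pi.neg_apply, heatK_neg, absExp, sgnExp]
  ring

lemma hasDerivAt_sgnExp (k : ℝ) {σ η : ℝ → ℝ} {σ' η' t : ℝ} (hσ : HasDerivAt σ σ' t)
    (hη : HasDerivAt η η' t) (hs : 0 < σ t) :
    HasDerivAt (fun t => sgnExp k (σ t) (η t))
      (k ^ 2 / 2 * σ' * sgnExp k (σ t) (η t) + k * η' * absExp k (σ t) (η t)
        + heatK (σ t) (η t) * (2 * η' - η t / σ t * σ')) t := by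
  convert! (hasDerivAt_halfExp k hσ hη hs).sub (hasDerivAt_halfExp k hσ hη.neg hs) using 1
  simp only [Pi.neg_apply, heatK_neg, absExp, sgnExp]
  ring

/-- `∂ₓA = u` and `∂ₛA = (k + w) / 2`, along a curve. -/
lemma hasDerivAt_aF {k : ℝ} (hk : 0 < k) {σ η : ℝ → ℝ} {σ' η' t : ℝ} (hσ : HasDerivAt σ σ' t)
    (hη : HasDerivAt η η' t) (hs : 0 < σ t) :
    HasDerivAt (fun t => aF k (σ t) (η t))
      ((k + wF k (σ t) (η t)) / 2 * σ' + uF k (σ t) (η t) * η') t := by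
  have hG := (zero_lt_one.trans_le (one_le_absExp hk.le hs (η t))).ne'
  convert! ((hasDerivAt_absExp k hσ hη hs).log hG).const_mul (1 / k) using 1
  simp only [wF, uF]
  field_simp
  ring

/-- The `x`-derivative of `u` is `k (1 - u²) + w`, and its `s`-derivative is `∂ₓw / 2`. -/
lemma hasDerivAt_uF {k : ℝ} (hk : 0 < k) {σ η : ℝ → ℝ} {σ' η' t : ℝ} (hσ : HasDerivAt σ σ' t)
    (hη : HasDerivAt η η' t) (hs : 0 < σ t) :
    HasDerivAt (fun t => uF k (σ t) (η t))
      (-(η t / σ t + k * uF k (σ t) (η t)) * wF k (σ t) (η t) / 2 * σ'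
        + (k * (1 - uF k (σ t) (η t) ^ 2) + wF k (σ t) (η t)) * η') t := by
  have hG := (zero_lt_one.trans_le (one_le_absExp hk.le hs (η t))).ne'
  convert! (hasDerivAt_sgnExp k hσ hη hs).div (hasDerivAt_absExp k hσ hη hs) hG using 1
  simp only [wF, uF]
  field_simp
  ring

lemma hasDerivAt_wF {k s : ℝ} (hk : 0 < k) (hs : 0 < s) (x : ℝ) :
    HasDerivAt (wF k s) (-(x / s + k * uF k s x) * wF k s x) x := by
  have hr : 0 < √s := Real.sqrt_pos.2 hs
  have hr2 : √s ^ 2 = s := Real.sq_sqrt hs.le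
  have hG := (zero_lt_one.trans_le (one_le_absExp hk.le hs x)).ne'
  have h1 : HasDerivAt (heatK s) (-(x / s) * heatK s x) x := by
    have h := ((hasDerivAt_gphi (x / √s)).comp x ((hasDerivAt_id x).div_const (√s))).div_const (√s)
    convert! h using 1
    simp only [heatK]
    generalize √s = r at *
    rw [← hr2]
    field_simp
  have h2 := hasDerivAt_absExp k (hasDerivAt_const x s) (hasDerivAt_id x) hs
  convert! (h1.const_mul 2).div h2 hG using 1
  simp only [wF, uF, id]
  field_simp
  ring

lemma halfExp_nonneg (k s x : ℝ) : 0 ≤ halfExp k s x :=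
  mul_nonneg (Real.exp_pos _).le (gPhi_nonneg _)

lemma abs_uF_le (k s x : ℝ) : |uF k s x| ≤ 1 := by
  have h1 := halfExp_nonneg k s x
  have h2 := halfExp_nonneg k s (-x)
  rw [uF, sgnExp, absExp, abs_div, abs_of_nonneg (add_nonneg h1 h2)]
  refine div_le_one_of_le₀ ?_ (add_nonneg h1 h2)
  rw [abs_le]; constructor <;> linarith

lemma abs_wF_le {k s : ℝ} (hk : 0 ≤ k) (hs : 0 < s) (x : ℝ) : |wF k s x| ≤ 2 / √s := by
  have hG := one_le_absExp hk hs x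
  have hr : 0 < √s := Real.sqrt_pos.2 hs
  have hp : 0 ≤ heatK s x := div_nonneg (gphi_nonneg _) hr.le
  have hp1 : heatK s x ≤ 1 / √s := div_le_div_of_nonneg_right (gphi_le_one _) hr.le
  rw [wF, abs_of_nonneg (by positivity)]
  calc 2 * heatK s x / absExp k s x ≤ 2 * heatK s x := div_le_self (by positivity) hG
    _ ≤ 2 * (1 / √s) := by linarith
    _ = 2 / √s := by ring

lemma absExp_le {k s : ℝ} (hk : 0 ≤ k) (x : ℝ) :
    absExp k s x ≤ 2 * Real.exp (k ^ 2 * s / 2 + k * |x|) := by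
  have h (y : ℝ) (hy : y ≤ |x|) : halfExp k s y ≤ Real.exp (k ^ 2 * s / 2 + k * |x|) := by
    calc halfExp k s y ≤ Real.exp (k ^ 2 * s / 2 + k * y) * 1 :=
          mul_le_mul_of_nonneg_left (gPhi_le_one _) (Real.exp_pos _).le
      _ ≤ _ := by rw [mul_one]; gcongr
  have := h x (le_abs_self x)
  have := h (-x) (neg_le_abs x)
  rw [absExp]; linarith

lemma aF_le {k s : ℝ} (hk : 0 < k) (hs : 0 < s) (x : ℝ) :
    aF k s x ≤ Real.log 2 / k + k * s / 2 + |x| := by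
  have h := Real.log_le_log (zero_lt_one.trans_le (one_le_absExp hk.le hs x))
    (absExp_le (s := s) hk.le x)
  rw [Real.log_mul two_ne_zero (Real.exp_pos _).ne', Real.log_exp] at h
  calc aF k s x ≤ 1 / k * (Real.log 2 + (k ^ 2 * s / 2 + k * |x|)) :=
        mul_le_mul_of_nonneg_left h (by positivity)
    _ = _ := by field_simp; ring

/-! ### Differentiating Gaussian expectations in time -/

/-- Stein's identity for the standard Gaussian. -/
lemma stein {g g' : ℝ → ℝ} (hg : ∀ z, HasDerivAt g (g' z) z)
    (h1 : Integrable (fun z => g z * z) (gaussianReal 0 1)) (h2 : Integrable g' (gaussianReal 0 1))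
    (h3 : Integrable g (gaussianReal 0 1)) :
    ∫ z, g z * z ∂(gaussianReal 0 1) = ∫ z, g' z ∂(gaussianReal 0 1) := by
  have i1 := integrable_gauss h1
  have h := integral_mul_deriv_eq_deriv_mul_of_integrable (u := g) (v := gphi) (u' := g')
    (v' := fun z => -z * gphi z) (fun z _ => hg z) (fun z _ => hasDerivAt_gphi z)
    (i1.neg.congr (Eventually.of_forall fun z => by simp; ring)) (integrable_gauss h2)
    (integrable_gauss h3)
  rw [integral_gauss, integral_gauss, ← neg_neg (∫ z, g' z * gphi z), ← h, ← integral_neg]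
  congr 1; funext z; ring

/-- `h t y` grows at most exponentially in `|y|`, uniformly for `t ∈ I`. -/
def ExpBdd (I : Set ℝ) (h : ℝ → ℝ → ℝ) : Prop :=
  ∃ K c : ℝ, 0 ≤ K ∧ 0 ≤ c ∧ ∀ t ∈ I, ∀ y, |h t y| ≤ K * Real.exp (c * |y|)

namespace ExpBdd

variable {I : Set ℝ} {f g : ℝ → ℝ → ℝ}

lemma of_le {K : ℝ} (h : ∀ t ∈ I, ∀ y, |f t y| ≤ K) : ExpBdd I f := by
  refine ⟨|K|, 0, abs_nonneg _, le_rfl, fun t ht y => ?_⟩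
  simpa using (h t ht y).trans (le_abs_self K)

lemma const (c : ℝ) : ExpBdd I (fun _ _ => c) := of_le fun _ _ _ => le_rfl

lemma snd : ExpBdd I (fun _ y => y) := by
  refine ⟨1, 1, zero_le_one, zero_le_one, fun t _ y => ?_⟩
  have := Real.add_one_le_exp |y|
  simp only [one_mul]; linarith

lemma add (hf : ExpBdd I f) (hg : ExpBdd I g) : ExpBdd I (fun t y => f t y + g t y) := by
  obtain ⟨K, c, hK, hc, h⟩ := hf
  obtain ⟨L, d, hL, hd, h'⟩ := hg
  refine ⟨K + L, c + d, by positivity, by positivity, fun t ht y => ?_⟩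
  have e1 : Real.exp (c * |y|) ≤ Real.exp ((c + d) * |y|) := by gcongr; linarith
  have e2 : Real.exp (d * |y|) ≤ Real.exp ((c + d) * |y|) := by gcongr; linarith
  calc |f t y + g t y| ≤ |f t y| + |g t y| := abs_add_le _ _
    _ ≤ K * Real.exp (c * |y|) + L * Real.exp (d * |y|) := add_le_add (h t ht y) (h' t ht y)
    _ ≤ K * Real.exp ((c + d) * |y|) + L * Real.exp ((c + d) * |y|) := by gcongr
    _ = _ := by ring

lemma mul (hf : ExpBdd I f) (hg : ExpBdd I g) : ExpBdd I (fun t y => f t y * g t y) := by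
  obtain ⟨K, c, hK, hc, h⟩ := hf
  obtain ⟨L, d, hL, hd, h'⟩ := hg
  refine ⟨K * L, c + d, by positivity, by positivity, fun t ht y => ?_⟩
  calc |f t y * g t y| = |f t y| * |g t y| := abs_mul _ _
    _ ≤ (K * Real.exp (c * |y|)) * (L * Real.exp (d * |y|)) :=
      mul_le_mul (h t ht y) (h' t ht y) (abs_nonneg _) (by positivity)
    _ = _ := by rw [add_mul, Real.exp_add]; ring

lemma sub (hf : ExpBdd I f) (hg : ExpBdd I g) : ExpBdd I (fun t y => f t y - g t y) := by
  simpa [sub_eq_add_neg] using hf.add ((const (-1)).mul hg)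

lemma pow (hf : ExpBdd I f) (n : ℕ) : ExpBdd I (fun t y => f t y ^ n) := by
  induction n with
  | zero => simpa using const 1
  | succ n ih => simpa [pow_succ] using ih.mul hf

lemma shift (hf : ExpBdd I f) {a T : ℝ} (hT : ∀ t ∈ I, t ≤ T) (x : ℝ) :
    ExpBdd I (fun t z => f t (x + z * √(t - a))) := by
  obtain ⟨K, c, hK, hc, h⟩ := hf
  refine ⟨K * Real.exp (c * |x|), c * √(T - a), by positivity, by positivity, fun t ht z => ?_⟩
  refine (h t ht _).trans ?_
  rw [mul_assoc, ← Real.exp_add]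
  have h1 : √(t - a) ≤ √(T - a) := Real.sqrt_le_sqrt (by linarith [hT t ht])
  have h2 : |x + z * √(t - a)| ≤ |x| + |z| * √(T - a) := by
    refine (abs_add_le _ _).trans ?_
    rw [abs_mul, abs_of_nonneg (Real.sqrt_nonneg _)]
    gcongr
  gcongr
  calc c * |x + z * √(t - a)| ≤ c * (|x| + |z| * √(T - a)) := by gcongr
    _ = _ := by ring

lemma integrable (hf : ExpBdd I f) {t : ℝ} (ht : t ∈ I) (hc : Continuous (f t)) :
    Integrable (f t) (gaussianReal 0 1) := by
  obtain ⟨K, c, hK, -, h⟩ := hf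
  exact ((integrable_exp_abs_gauss c).const_mul K).mono' hc.aestronglyMeasurable
    (Eventually.of_forall fun z => h t ht z)

end ExpBdd

/-- Generator of Brownian motion: `d/dt E f(t, x + z√(t-a)) = E (∂ₜf + ∂ₓₓf / 2)`, for `f` whose
derivatives grow at most exponentially. The mixed term `∂ₓf · z / (2√(t-a))` is turned into
`∂ₓₓf / 2` by Stein's identity. The derivative hypothesis `hd` is along the curves
`t ↦ (t, x + z√(t-a))`, so that no joint differentiability is needed. -/
lemma hasDerivAt_gauss_expect {a t₁ t₂ t₀ x : ℝ} (ha : a < t₁) (h₁ : t₁ < t₀) (h₂ : t₀ < t₂)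
    {f ft fx fxx : ℝ → ℝ → ℝ}
    (hd : ∀ t ∈ Ioo t₁ t₂, ∀ z, HasDerivAt (fun s => f s (x + z * √(s - a)))
      (ft t (x + z * √(t - a)) + fx t (x + z * √(t - a)) * (z * (1 / (2 * √(t - a))))) t)
    (hx : ∀ y, HasDerivAt (fx t₀) (fxx t₀ y) y)
    (hfc : ∀ t ∈ Ioo t₁ t₂, Continuous (f t)) (hftc : Continuous (ft t₀))
    (hfxxc : Continuous (fxx t₀))
    (bf : ExpBdd (Ioo t₁ t₂) f) (bft : ExpBdd (Ioo t₁ t₂) ft) (bfx : ExpBdd (Ioo t₁ t₂) fx)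
    (bfxx : ExpBdd (Ioo t₁ t₂) fxx) :
    HasDerivAt (fun t => ∫ z, f t (x + z * √(t - a)) ∂(gaussianReal 0 1))
      (∫ z, (ft t₀ (x + z * √(t₀ - a)) + fxx t₀ (x + z * √(t₀ - a)) / 2)
        ∂(gaussianReal 0 1)) t₀ := by
  have ht₀ : t₀ ∈ Ioo t₁ t₂ := ⟨h₁, h₂⟩
  have hT : ∀ t ∈ Ioo t₁ t₂, t ≤ t₂ := fun t ht => ht.2.le
  have hr : 0 < √(t₀ - a) := Real.sqrt_pos.2 (by linarith)
  have hfxc : Continuous (fx t₀) :=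
    continuous_iff_continuousAt.2 fun y => (hx y).continuousAt
  have binv : ExpBdd (Ioo t₁ t₂) (fun t z => z * (1 / (2 * √(t - a)))) := by
    refine ExpBdd.snd.mul (ExpBdd.of_le (K := 1 / (2 * √(t₁ - a))) fun t ht _ => ?_)
    have p : 0 < √(t₁ - a) := Real.sqrt_pos.2 (by linarith)
    rw [abs_of_nonneg (by positivity)]
    have : √(t₁ - a) ≤ √(t - a) := Real.sqrt_le_sqrt (by linarith [ht.1])
    gcongr
  have bdom := (bft.shift (a := a) hT x).add ((bfx.shift (a := a) hT x).mul binv)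
  have cf := hfc t₀ ht₀
  have sf := (bf.shift (a := a) hT x).integrable ht₀ (by fun_prop)
  have sft := (bft.shift (a := a) hT x).integrable ht₀ (by fun_prop)
  have sfx := (bfx.shift (a := a) hT x).integrable ht₀ (by fun_prop)
  have sfxx := (bfxx.shift (a := a) hT x).integrable ht₀ (by fun_prop)
  have sfxz := ((bfx.shift (a := a) hT x).mul ExpBdd.snd).integrable ht₀ (by fun_prop)
  obtain ⟨K, c, -, -, hK⟩ := bdom
  have key := (hasDerivAt_integral_of_dominated_loc_of_deriv_le
    (F := fun t z => f t (x + z * √(t - a)))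
    (F' := fun t z => ft t (x + z * √(t - a)) +
      fx t (x + z * √(t - a)) * (z * (1 / (2 * √(t - a)))))
    (bound := fun z => K * Real.exp (c * |z|)) (μ := gaussianReal 0 1)
    (Ioo_mem_nhds h₁ h₂)
    (by
      filter_upwards [Ioo_mem_nhds h₁ h₂] with t ht
      have := hfc t ht
      exact Continuous.aestronglyMeasurable (by fun_prop))
    sf (Continuous.aestronglyMeasurable (by fun_prop))
    (Eventually.of_forall fun z t ht => hK t ht z)
    ((integrable_exp_abs_gauss c).const_mul K)
    (Eventually.of_forall fun z t ht => hd t ht z)).2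
  convert! key using 1
  have st := stein (g := fun z => fx t₀ (x + z * √(t₀ - a)))
    (g' := fun z => fxx t₀ (x + z * √(t₀ - a)) * √(t₀ - a))
    (fun z => (hx _).comp z (by
      simpa using ((hasDerivAt_id z).mul_const (√(t₀ - a))).const_add x))
    sfxz (sfxx.mul_const _) sfx
  rw [integral_add sft (sfxx.div_const 2)]
  simp_rw [← mul_assoc]
  rw [integral_add sft (sfxz.mul_const _), integral_mul_const, st, integral_mul_const,
    integral_div]
  have e (p q r : ℝ) (hr : r ≠ 0) : p + q / 2 = p + q * r * (1 / (2 * r)) := by field_simp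
  exact e _ _ _ hr.ne'

/-! ### The heat semigroup applied to `exp(m A)` and `(∂ₓA)² exp(m A)` -/

section Time

variable {a b k m t₁ t₂ : ℝ}

/-- `exp(m A)` in closed form, with `k = m'` and `s = b - t`. -/
noncomputable def eF (k m s x : ℝ) : ℝ := Real.exp (m * aF k s x)

/-- `∂ₓₓA` in closed form. -/
noncomputable def kF (k s x : ℝ) : ℝ := k * (1 - uF k s x ^ 2) + wF k s x

/-- `∂ₓw` in closed form. -/
noncomputable def wxF (k s x : ℝ) : ℝ := -(x / s + k * uF k s x) * wF k s x

/-- `∂ₓₓₓA` in closed form. -/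
noncomputable def kxF (k s x : ℝ) : ℝ := -2 * k * uF k s x * kF k s x + wxF k s x

lemma hasDerivAt_uF_x (hk : 0 < k) {s : ℝ} (hs : 0 < s) (y : ℝ) :
    HasDerivAt (uF k s) (kF k s y) y := by
  convert! hasDerivAt_uF hk (hasDerivAt_const y s) (hasDerivAt_id y) hs using 1
  simp [kF]

lemma hasDerivAt_aF_x (hk : 0 < k) {s : ℝ} (hs : 0 < s) (y : ℝ) :
    HasDerivAt (aF k s) (uF k s y) y := by
  convert! hasDerivAt_aF hk (hasDerivAt_const y s) (hasDerivAt_id y) hs using 1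
  simp

lemma hasDerivAt_eF_x (hk : 0 < k) {s : ℝ} (hs : 0 < s) (y : ℝ) :
    HasDerivAt (eF k m s) (m * uF k s y * eF k m s y) y := by
  convert! ((hasDerivAt_aF_x hk hs y).const_mul m).exp using 1
  simp only [eF]; ring

lemma hasDerivAt_kF_x (hk : 0 < k) {s : ℝ} (hs : 0 < s) (y : ℝ) :
    HasDerivAt (kF k s) (kxF k s y) y := by
  convert! ((((hasDerivAt_uF_x hk hs y).pow 2).const_sub 1).const_mul k).add
    (hasDerivAt_wF hk hs y) using 1
  simp [kxF, wxF]; ring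

lemma continuous_of_hasDerivAt {f f' : ℝ → ℝ} (h : ∀ y, HasDerivAt f (f' y) y) : Continuous f :=
  continuous_iff_continuousAt.2 fun y => (h y).continuousAt

lemma expBdd_uF : ExpBdd (Ioo t₁ t₂) (fun t y => uF k (b - t) y) :=
  ExpBdd.of_le fun _ _ _ => abs_uF_le _ _ _

lemma expBdd_wF (hk : 0 < k) (hb : t₂ < b) : ExpBdd (Ioo t₁ t₂) (fun t y => wF k (b - t) y) := by
  refine ExpBdd.of_le (K := 2 / √(b - t₂)) fun t ht y => ?_
  refine (abs_wF_le hk.le (by linarith [ht.2]) y).trans ?_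
  have p : 0 < √(b - t₂) := Real.sqrt_pos.2 (by linarith)
  have : √(b - t₂) ≤ √(b - t) := Real.sqrt_le_sqrt (by linarith [ht.2])
  gcongr

lemma expBdd_eF (hk : 0 < k) (hm : 0 < m) (hb : t₂ < b) :
    ExpBdd (Ioo t₁ t₂) (fun t y => eF k m (b - t) y) := by
  refine ⟨Real.exp (m * (Real.log 2 / k + k * (b - t₁) / 2)), m, by positivity, hm.le,
    fun t ht y => ?_⟩
  simp only [eF]
  rw [Real.abs_exp, ← Real.exp_add, Real.exp_le_exp, ← mul_add]
  refine mul_le_mul_of_nonneg_left ((aF_le hk (by linarith [ht.2]) y).trans ?_) hm.le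
  have : k * (b - t) ≤ k * (b - t₁) := by gcongr; exact ht.1.le
  linarith

lemma expBdd_kF (hk : 0 < k) (hb : t₂ < b) : ExpBdd (Ioo t₁ t₂) (fun t y => kF k (b - t) y) :=
  ((ExpBdd.const k).mul ((ExpBdd.const 1).sub (expBdd_uF.pow 2))).add (expBdd_wF hk hb)

lemma expBdd_wxF (hk : 0 < k) (hb : t₂ < b) :
    ExpBdd (Ioo t₁ t₂) (fun t y => wxF k (b - t) y) := by
  have h : ExpBdd (Ioo t₁ t₂) (fun t _ => 1 / (b - t)) := by
    refine ExpBdd.of_le (K := 1 / (b - t₂)) fun t ht y => ?_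
    have p : 0 < b - t₂ := by linarith
    have q : b - t₂ ≤ b - t := by linarith [ht.2]
    have q' : 0 < b - t := by linarith
    rw [abs_of_pos (by positivity)]
    gcongr
  have h2 := ((ExpBdd.const (-1)).mul ((ExpBdd.snd.mul h).add
    ((ExpBdd.const k).mul (expBdd_uF (b := b) (k := k))))).mul (expBdd_wF hk hb)
  convert! h2 using 3
  rw [wxF]; ring

lemma expBdd_kxF (hk : 0 < k) (hb : t₂ < b) :
    ExpBdd (Ioo t₁ t₂) (fun t y => kxF k (b - t) y) :=
  (((ExpBdd.const (-2 * k)).mul expBdd_uF).mul (expBdd_kF hk hb)).add (expBdd_wxF hk hb)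

lemma hasDerivAt_curve (x z : ℝ) {t : ℝ} (ha : a < t) :
    HasDerivAt (fun s => x + z * √(s - a)) (z * (1 / (2 * √(t - a)))) t :=
  ((((hasDerivAt_id t).sub_const a).sqrt (by simp; linarith)).const_mul z).const_add x

lemma hasDerivAt_eF_curve (hk : 0 < k) (x z : ℝ) {t : ℝ} (ha : a < t) (hb : t < b) :
    HasDerivAt (fun s => eF k m (b - s) (x + z * √(s - a)))
      (-(m * (k + wF k (b - t) (x + z * √(t - a))) / 2) * eF k m (b - t) (x + z * √(t - a))
        + m * uF k (b - t) (x + z * √(t - a)) * eF k m (b - t) (x + z * √(t - a))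
          * (z * (1 / (2 * √(t - a))))) t := by
  have h := ((hasDerivAt_aF hk ((hasDerivAt_id t).const_sub b) (hasDerivAt_curve x z ha)
    (by simpa using hb)).const_mul m).exp
  convert! h using 1
  simp only [id, eF]; ring

lemma hasDerivAt_uF_curve (hk : 0 < k) (x z : ℝ) {t : ℝ} (ha : a < t) (hb : t < b) :
    HasDerivAt (fun s => uF k (b - s) (x + z * √(s - a)))
      (-(wxF k (b - t) (x + z * √(t - a)) / 2)
        + kF k (b - t) (x + z * √(t - a)) * (z * (1 / (2 * √(t - a))))) t := by
  have h := hasDerivAt_uF hk ((hasDerivAt_id t).const_sub b) (hasDerivAt_curve x z ha)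
    (by simpa using hb)
  convert! h using 1
  simp only [id, kF, wxF]; ring

/-- Since `A` solves the Parisi equation, `(∂ₜ + ∂ₓₓ/2) exp(m A) = m (m - m') / 2 (∂ₓA)² exp(m A)`;
this is the resulting derivative of the normalisation `exp(m B)`. -/
lemma hasDerivAt_denom (hk : 0 < k) (hm : 0 < m) (x : ℝ) {t : ℝ} (ha : a < t) (hb : t < b) :
    HasDerivAt (fun s => ∫ z, eF k m (b - s) (x + z * √(s - a)) ∂(gaussianReal 0 1))
      (∫ z, m * (m - k) / 2 * (uF k (b - t) (x + z * √(t - a)) ^ 2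
        * eF k m (b - t) (x + z * √(t - a))) ∂(gaussianReal 0 1)) t := by
  have hs : 0 < b - t := by linarith
  have h₁ : a < (a + t) / 2 := by linarith
  have h₂ : (t + b) / 2 < b := by linarith
  have cu (s : ℝ) (hs : 0 < s) := continuous_of_hasDerivAt (hasDerivAt_uF_x hk hs)
  have ce (s : ℝ) (hs : 0 < s) := continuous_of_hasDerivAt (hasDerivAt_eF_x (m := m) hk hs)
  have ck := continuous_of_hasDerivAt (hasDerivAt_kF_x hk hs)
  have cw := continuous_of_hasDerivAt (hasDerivAt_wF hk hs)
  have cu' := cu _ hs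
  have ce' := ce _ hs
  have bu : ExpBdd (Ioo ((a + t) / 2) ((t + b) / 2)) (fun t y => uF k (b - t) y) := expBdd_uF
  have be := expBdd_eF (t₁ := (a + t) / 2) hk hm h₂
  have bk := expBdd_kF (t₁ := (a + t) / 2) hk h₂
  have bw := expBdd_wF (t₁ := (a + t) / 2) hk h₂
  have key := hasDerivAt_gauss_expect (x := x) h₁ (t₀ := t) (t₂ := (t + b) / 2) (by linarith)
    (by linarith)
    (f := fun t y => eF k m (b - t) y)
    (ft := fun t y => -(m * (k + wF k (b - t) y) / 2) * eF k m (b - t) y)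
    (fx := fun t y => m * uF k (b - t) y * eF k m (b - t) y)
    (fxx := fun t y => (m * kF k (b - t) y + m ^ 2 * uF k (b - t) y ^ 2) * eF k m (b - t) y)
    (fun s hs z => hasDerivAt_eF_curve hk x z (h₁.trans hs.1) (hs.2.trans h₂))
    (fun y => by
      convert! ((hasDerivAt_uF_x hk hs y).const_mul m).mul (hasDerivAt_eF_x hk hs y) using 1
      ring)
    (fun s hs => ce _ (by linarith [hs.2])) (by fun_prop) (by fun_prop) be
    (by
      convert! ((ExpBdd.const (-(m / 2))).mul ((ExpBdd.const k).add bw)).mul be using 3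
      ring)
    (((ExpBdd.const m).mul bu).mul be)
    ((((ExpBdd.const m).mul bk).add ((ExpBdd.const (m ^ 2)).mul (bu.pow 2))).mul be)
  convert! key using 1
  congr 1; funext z
  simp only [kF]; ring

/-- The analogue of `hasDerivAt_denom` for the unnormalised numerator `E[(∂ₓA)² exp(m A)]`. -/
lemma hasDerivAt_numer (hk : 0 < k) (hm : 0 < m) (x : ℝ) {t : ℝ} (ha : a < t) (hb : t < b) :
    HasDerivAt (fun s => ∫ z, uF k (b - s) (x + z * √(s - a)) ^ 2
        * eF k m (b - s) (x + z * √(s - a)) ∂(gaussianReal 0 1))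
      (∫ z, ((kF k (b - t) (x + z * √(t - a)) ^ 2 + 2 * (m - k) * kF k (b - t) (x + z * √(t - a))
          * uF k (b - t) (x + z * √(t - a)) ^ 2) * eF k m (b - t) (x + z * √(t - a))
        + m * (m - k) / 2 * (uF k (b - t) (x + z * √(t - a)) ^ 4
          * eF k m (b - t) (x + z * √(t - a)))) ∂(gaussianReal 0 1)) t := by
  have hs : 0 < b - t := by linarith
  have h₁ : a < (a + t) / 2 := by linarith
  have h₂ : (t + b) / 2 < b := by linarith
  have cu (s : ℝ) (hs : 0 < s) := continuous_of_hasDerivAt (hasDerivAt_uF_x hk hs)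
  have ce (s : ℝ) (hs : 0 < s) := continuous_of_hasDerivAt (hasDerivAt_eF_x (m := m) hk hs)
  have ck := continuous_of_hasDerivAt (hasDerivAt_kF_x hk hs)
  have cw := continuous_of_hasDerivAt (hasDerivAt_wF hk hs)
  have cu' := cu _ hs
  have ce' := ce _ hs
  have cwx : Continuous (wxF k (b - t)) := by unfold wxF; fun_prop
  have ckx : Continuous (kxF k (b - t)) := by unfold kxF; fun_prop
  have bu : ExpBdd (Ioo ((a + t) / 2) ((t + b) / 2)) (fun t y => uF k (b - t) y) := expBdd_uF
  have be := expBdd_eF (t₁ := (a + t) / 2) hk hm h₂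
  have bk := expBdd_kF (t₁ := (a + t) / 2) hk h₂
  have bw := expBdd_wF (t₁ := (a + t) / 2) hk h₂
  have bwx := expBdd_wxF (t₁ := (a + t) / 2) hk h₂
  have bkx := expBdd_kxF (t₁ := (a + t) / 2) hk h₂
  have key := hasDerivAt_gauss_expect (x := x) h₁ (t₀ := t) (t₂ := (t + b) / 2) (by linarith)
    (by linarith)
    (f := fun t y => uF k (b - t) y ^ 2 * eF k m (b - t) y)
    (ft := fun t y => (-1 * (uF k (b - t) y * wxF k (b - t) y)
      - m / 2 * (uF k (b - t) y ^ 2 * (k + wF k (b - t) y))) * eF k m (b - t) y)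
    (fx := fun t y => (2 * (uF k (b - t) y * kF k (b - t) y) + m * uF k (b - t) y ^ 3)
      * eF k m (b - t) y)
    (fxx := fun t y => (2 * kF k (b - t) y ^ 2 + 2 * (uF k (b - t) y * kxF k (b - t) y)
      + 5 * m * (uF k (b - t) y ^ 2 * kF k (b - t) y) + m ^ 2 * uF k (b - t) y ^ 4)
      * eF k m (b - t) y)
    (fun s hs z => by
      have ha' := h₁.trans hs.1
      have hb' := hs.2.trans h₂
      convert! ((hasDerivAt_uF_curve hk x z ha' hb').pow 2).mul
        (hasDerivAt_eF_curve (m := m) hk x z ha' hb') using 1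
      simp only [Pi.pow_apply, Nat.cast_ofNat]; ring)
    (fun y => by
      have hu := hasDerivAt_uF_x hk hs y
      have he := hasDerivAt_eF_x (m := m) hk hs y
      convert! (((hu.mul (hasDerivAt_kF_x hk hs y)).const_mul 2).add
        ((hu.pow 3).const_mul m)).mul he using 1
      simp only [Pi.pow_apply, Pi.mul_apply, Pi.add_apply, Nat.cast_ofNat]; ring)
    (fun s hs => by
      have h := cu (b - s) (by linarith [hs.2])
      have h' := ce (b - s) (by linarith [hs.2])
      fun_prop)
    (by fun_prop) (by fun_prop) ((bu.pow 2).mul be)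
    ((((ExpBdd.const (-1)).mul (bu.mul bwx)).sub
      ((ExpBdd.const (m / 2)).mul ((bu.pow 2).mul ((ExpBdd.const k).add bw)))).mul be)
    ((((ExpBdd.const 2).mul (bu.mul bk)).add ((ExpBdd.const m).mul (bu.pow 3))).mul be)
    ((((((ExpBdd.const 2).mul (bk.pow 2)).add ((ExpBdd.const 2).mul (bu.mul bkx))).add
      ((ExpBdd.const (5 * m)).mul ((bu.pow 2).mul bk))).add
      ((ExpBdd.const (m ^ 2)).mul (bu.pow 4))).mul be)
  convert! key using 1
  congr 1; funext z
  simp only [kxF, kF]; ring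

end Time

/-! ### Normalisation by `exp(m B)` -/

lemma integrable_mul_eF {a b k m t : ℝ} (hk : 0 < k) (hm : 0 < m) (x : ℝ) (ha : a < t)
    (hb : t < b) {h : ℝ → ℝ → ℝ} (hc : Continuous (h t)) (bh : ExpBdd (Ioo a ((t + b) / 2)) h) :
    Integrable (fun z => h t (x + z * √(t - a)) * eF k m (b - t) (x + z * √(t - a)))
      (gaussianReal 0 1) := by
  have ce := continuous_of_hasDerivAt (hasDerivAt_eF_x (m := m) hk (s := b - t) (by linarith))
  exact ((bh.mul (expBdd_eF hk hm (by linarith))).shift (a := a) (fun s hs => hs.2.le)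
    x).integrable (t := t) ⟨ha, by linarith⟩ (by fun_prop)

lemma integral_eF_pos {a b k m t : ℝ} (hk : 0 < k) (hm : 0 < m) (x : ℝ) (ha : a < t)
    (hb : t < b) : 0 < ∫ z, eF k m (b - t) (x + z * √(t - a)) ∂(gaussianReal 0 1) := by
  have hi : Integrable (fun z => eF k m (b - t) (x + z * √(t - a))) (gaussianReal 0 1) := by
    simpa using integrable_mul_eF hk hm x ha hb (h := fun _ _ => 1) continuous_const
      (ExpBdd.const 1)
  exact integral_exp_pos hi

/-- The normaliser `exp(m B)` turns each `V`-weighted expectation into a quotient. -/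
lemma integral_mul_V {a b m m' t : ℝ} (hm : 0 < m) (hm' : 0 < m') (x : ℝ) (ha : a < t)
    (hb : t < b) (h : ℝ → ℝ) :
    ∫ z, h z * V a b m m' t x (x + z * √(t - a)) ∂(gaussianReal 0 1)
      = (∫ z, h z * eF m' m (b - t) (x + z * √(t - a)) ∂(gaussianReal 0 1))
        / ∫ z, eF m' m (b - t) (x + z * √(t - a)) ∂(gaussianReal 0 1) := by
  have hD := integral_eF_pos hm' hm x ha hb
  have hB : Real.exp (m * B a b m m' t x)
      = ∫ z, eF m' m (b - t) (x + z * √(t - a)) ∂(gaussianReal 0 1) := by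
    simp only [B, A_eq hm'.le hb]
    rw [← mul_assoc, mul_one_div_cancel hm.ne', one_mul]
    exact Real.exp_log hD
  rw [← integral_div, ← hB]
  congr 1; funext z
  rw [V, A_eq hm'.le hb, mul_sub, Real.exp_sub, eF, mul_div_assoc]

/-- formula for `∂ₜC(t,x)` on `(a,b) × ℝ`. -/
theorem C_time_deriv (a b m m' : ℝ) (ha : 0 ≤ a) (hab : a < b)
    (hm : 0 < m) (hmm' : m < m') :
    ∀ t ∈ Set.Ioo a b, ∀ x : ℝ,
      HasDerivAt (fun s => C a b m m' s x)
        ((∫ z, ((deriv (deriv (A b m' t)) (x + z * Real.sqrt (t - a))) ^ 2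
              + 2 * (m - m') * deriv (deriv (A b m' t)) (x + z * Real.sqrt (t - a))
                  * (deriv (A b m' t) (x + z * Real.sqrt (t - a))) ^ 2)
            * V a b m m' t x (x + z * Real.sqrt (t - a)) ∂(gaussianReal 0 1))
          + (m - m') * m / 2 *
            ((∫ z, (deriv (A b m' t) (x + z * Real.sqrt (t - a))) ^ 4
                * V a b m m' t x (x + z * Real.sqrt (t - a)) ∂(gaussianReal 0 1))
              - (∫ z, (deriv (A b m' t) (x + z * Real.sqrt (t - a))) ^ 2
                  * V a b m m' t x (x + z * Real.sqrt (t - a)) ∂(gaussianReal 0 1)) ^ 2)) t := by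
  intro t ht x
  obtain ⟨ha', hb'⟩ := ht
  have hk : 0 < m' := hm.trans hmm'
  have hs : 0 < b - t := by linarith
  have dA {s : ℝ} (h : s < b) : deriv (A b m' s) = uF m' (b - s) := by
    rw [show A b m' s = aF m' (b - s) from funext (A_eq hk.le h)]
    exact funext fun y => (hasDerivAt_aF_x hk (by linarith) y).deriv
  have ddA : deriv (deriv (A b m' t)) = kF m' (b - t) := by
    rw [dA hb']; exact funext fun y => (hasDerivAt_uF_x hk hs y).deriv
  have cu := continuous_of_hasDerivAt (hasDerivAt_uF_x hk hs)
  have ck := continuous_of_hasDerivAt (hasDerivAt_kF_x hk hs)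
  have hb2 : (t + b) / 2 < b := by linarith
  have bu : ExpBdd (Ioo a ((t + b) / 2)) (fun t y => uF m' (b - t) y) := expBdd_uF
  have bk := expBdd_kF (t₁ := a) hk hb2
  have hD := integral_eF_pos hk hm x ha' hb'
  have i1 := integrable_mul_eF hk hm x ha' hb'
    (h := fun t y => kF m' (b - t) y ^ 2 + 2 * (m - m') * kF m' (b - t) y * uF m' (b - t) y ^ 2)
    (by fun_prop)
    ((bk.pow 2).add (((ExpBdd.const (2 * (m - m'))).mul bk).mul (bu.pow 2)))
  have i2 := integrable_mul_eF hk hm x ha' hb' (h := fun t y => uF m' (b - t) y ^ 4)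
    (by fun_prop) (bu.pow 4)
  have hC : (fun s => C a b m m' s x) =ᶠ[𝓝 t] fun s =>
      (∫ z, uF m' (b - s) (x + z * √(s - a)) ^ 2 * eF m' m (b - s) (x + z * √(s - a))
        ∂(gaussianReal 0 1)) / ∫ z, eF m' m (b - s) (x + z * √(s - a)) ∂(gaussianReal 0 1) := by
    filter_upwards [Ioo_mem_nhds ha' hb'] with s hs'
    rw [C, dA hs'.2, integral_mul_V hm hk x hs'.1 hs'.2]
  have hN' := hasDerivAt_numer hk hm x ha' hb'
  have hD' := hasDerivAt_denom hk hm x ha' hb'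
  rw [integral_add i1 (i2.const_mul _), integral_const_mul] at hN'
  rw [integral_const_mul] at hD'
  refine HasDerivAt.congr_of_eventuallyEq ?_ hC
  convert! hN'.div hD' hD.ne' using 1
  rw [ddA, dA hb', integral_mul_V hm hk x ha' hb', integral_mul_V hm hk x ha' hb',
    integral_mul_V hm hk x ha' hb']
  -- What remains is the quotient rule, with the four integrals as opaque numbers.
  have alg (X N F D : ℝ) (hD : D ≠ 0) :
      X / D + (m - m') * m / 2 * (F / D - (N / D) ^ 2)
        = ((X + m * (m - m') / 2 * F) * D - N * (m * (m - m') / 2 * N)) / D ^ 2 := by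
    field_simp
    ring
  exact alg _ _ _ _ hD.ne'
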